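/- Let d, M ≥ 1, ε > 0, and let L_m, R_m : ℝ^d × ℝ^d → ℝ^M (m = 1,…,M) be bounded continuous functions satisfying Σ_{m=1}^M R_m(q,p) L_m(q,p)ᵀ = I_M for all (q,p). Then for every u_0 : ℝ^d → ℂ^M with Schwartz-class components and every x ∈ ℝ^d: (2πε)^{−3d/2} Σ_{m=1}^M ∫_{ℝ^d} ∫_{ℝ^d} ∫_{ℝ^d} 2^{d/2} e^{(i/ε) Φ₀(x,y,q,p)} R_m(q,p) ( L_m(q,p)ᵀ u_0(y) ) dy dp dq = u_0(x), where Φ₀(x,y,q,p) = (i/2)|x−q|² + p·(x−q) + (i/2)|y−q|² − p·(y−q) and each integral is the iterated integral (innermost in y, then p, then q). -/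

import Mathlib

open MeasureTheory

noncomputable section

/-! Completeness collapses `∑ R_m L_mᵀ` to the identity as soon as the sum may be moved inside the
`(q, p)` integral, so everything rests on the integrability over phase space of
`∫ e^{iΦ₀/ε} u₀(y) dy`. With `ξ = p / (2πε)` and `g(v) = e^{-|v|²/(2ε)}` this inner integral is
`g(x - q) e^{2πi ξ·x}` times the Fourier transform at `ξ` of `g(· - q) u₀`. That transform is the
convolution of `𝓕(g(· - q))` with `𝓕 u₀`, hence bounded, uniformly in `q`, by the integrable
function `(|𝓕 g| ⋆ |𝓕 u₀|)(ξ)`, while `g(x - q)` provides the decay in `q`. Fourier inversion in `ξ`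
leaves `g(x - q)² u₀(x)`, whose `q`-integral cancels the normalization. -/

section FourierInvertible

open scoped FourierTransform Convolution RealInnerProductSpace

variable {V E : Type*} [NormedAddCommGroup V] [InnerProductSpace ℝ V] [FiniteDimensional ℝ V]
  [MeasurableSpace V] [BorelSpace V] [NormedAddCommGroup E] [NormedSpace ℂ E]

/-- Functions to which Fourier inversion applies pointwise: continuous and integrable, with
integrable Fourier transform. -/
structure IsFourierInvertible (f : V → E) : Prop where
  continuous : Continuous f
  integrable : Integrable f
  integrable_fourier : Integrable (𝓕 f)

theorem fourier_comp_sub_right (f : V → E) (a ξ : V) :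
    𝓕 (fun v ↦ f (v - a)) ξ = 𝐞 (-⟪a, ξ⟫) • 𝓕 f ξ := by
  simp_rw [sub_eq_add_neg, ← inner_neg_left]
  exact congrFun (VectorFourier.fourierIntegral_comp_add_right 𝐞 volume (innerₗ V) f (-a)) ξ

theorem continuous_fourier_of_integrable {f : V → E} (hf : Integrable f) : Continuous (𝓕 f) :=
  VectorFourier.fourierIntegral_continuous Real.continuous_fourierChar continuous_inner hf

theorem bddAbove_range_norm_fourier (f : V → E) : BddAbove (Set.range fun ξ ↦ ‖𝓕 f ξ‖) := by
  refine ⟨∫ v, ‖f v‖, ?_⟩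
  rintro _ ⟨ξ, rfl⟩
  exact VectorFourier.norm_fourierIntegral_le_integral_norm 𝐞 volume (innerₗ V) f ξ

theorem isFourierInvertible_gaussian {b : ℂ} (hb : 0 < b.re) :
    IsFourierInvertible fun v : V ↦ Complex.exp (-b * ‖v‖ ^ 2) where
  continuous := by fun_prop
  integrable := by
    simpa using GaussianFourier.integrable_cexp_neg_mul_sq_norm_add hb 0 (0 : V)
  integrable_fourier := by
    have hb' : 0 < ((Real.pi : ℂ) ^ 2 / b).re := by
      rw [div_eq_mul_inv, ← Complex.ofReal_pow, Complex.re_ofReal_mul, Complex.inv_re]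
      have : 0 < Complex.normSq b := Complex.normSq_pos.2 fun h ↦ by simp [h] at hb
      positivity
    rw [show 𝓕 (fun v : V ↦ Complex.exp (-b * ‖v‖ ^ 2)) = _ from
      funext (fourier_gaussian_innerProductSpace hb)]
    refine Integrable.const_mul ?_ _
    convert GaussianFourier.integrable_cexp_neg_mul_sq_norm_add hb' 0 (0 : V) using 3
    simp only [neg_mul, inner_zero_left, Complex.ofReal_zero, mul_zero, add_zero]
    ring

theorem isFourierInvertible_schwartzMap (f : SchwartzMap V E) : IsFourierInvertible f where
  continuous := f.continuous
  integrable := f.integrable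
  integrable_fourier := by
    rw [← SchwartzMap.fourier_coe]
    exact (𝓕 f).integrable

theorem isFourierInvertible_pi {κ : Type*} [Fintype κ] {f : V → κ → ℂ}
    (hf : ∀ k, IsFourierInvertible fun v ↦ f v k) : IsFourierInvertible f where
  continuous := continuous_pi fun k ↦ (hf k).continuous
  integrable := .of_eval fun k ↦ (hf k).integrable
  integrable_fourier := by
    refine .of_eval fun k ↦ (hf k).integrable_fourier.congr (.of_forall fun ξ ↦ ?_)
    exact (eval_integral
      (fun j ↦ (Real.fourierIntegral_convergent_iff ξ).2 (hf j).integrable) k).symm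

namespace IsFourierInvertible

theorem comp_sub_right {f : V → E} (hf : IsFourierInvertible f) (a : V) :
    IsFourierInvertible fun v ↦ f (v - a) where
  continuous := hf.continuous.comp (continuous_id.sub continuous_const)
  integrable := hf.integrable.comp_sub_right a
  integrable_fourier := by
    refine hf.integrable_fourier.congr' ?_ (.of_forall fun ξ ↦ ?_)
    · exact (continuous_fourier_of_integrable (hf.integrable.comp_sub_right a)).aestronglyMeasurable
    · rw [fourier_comp_sub_right, Circle.norm_smul]

theorem norm_le [CompleteSpace E] {u : V → E} (hu : IsFourierInvertible u) (v : V) :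
    ‖u v‖ ≤ ∫ ξ, ‖𝓕 u ξ‖ := by
  rw [← congrFun (hu.continuous.fourierInv_fourier_eq hu.integrable hu.integrable_fourier) v,
    Real.fourierInv_eq]
  exact (norm_integral_le_integral_norm _).trans_eq (by simp only [Circle.norm_smul])

variable {g : V → ℂ} {u : V → E}

theorem integrable_smul (hg : IsFourierInvertible g) (hu : IsFourierInvertible u) :
    Integrable fun v ↦ g v • u v :=
  hu.integrable.bdd_smul _ hg.continuous.aestronglyMeasurable (.of_forall hg.norm_le)

variable [CompleteSpace E]

theorem fourierInv_convolution (hg : IsFourierInvertible g) (hu : IsFourierInvertible u) :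
    𝓕⁻ (𝓕 g ⋆[.lsmul ℂ ℂ] 𝓕 u) = fun v ↦ g v • u v := by
  ext v
  rw [Real.fourierInv_eq_fourier_neg, Real.fourier_smul_convolution_eq hg.integrable_fourier
    hu.integrable_fourier, ← Real.fourierInv_eq_fourier_neg, ← Real.fourierInv_eq_fourier_neg,
    hg.continuous.fourierInv_fourier_eq hg.integrable hg.integrable_fourier,
    hu.continuous.fourierInv_fourier_eq hu.integrable hu.integrable_fourier]

theorem fourier_smul (hg : IsFourierInvertible g) (hu : IsFourierInvertible u) :
    𝓕 (fun v ↦ g v • u v) = 𝓕 g ⋆[.lsmul ℂ ℂ] 𝓕 u := by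
  have hcont : Continuous (𝓕 g ⋆[.lsmul ℂ ℂ] 𝓕 u) :=
    (bddAbove_range_norm_fourier u).continuous_convolution_right_of_integrable _
      hg.integrable_fourier (continuous_fourier_of_integrable hu.integrable)
  have hint : Integrable (𝓕 g ⋆[.lsmul ℂ ℂ] 𝓕 u) :=
    hg.integrable_fourier.integrable_convolution _ hu.integrable_fourier
  have hint' : Integrable (𝓕 (𝓕 g ⋆[.lsmul ℂ ℂ] 𝓕 u)) := by
    have h : Integrable (𝓕⁻ (𝓕 g ⋆[.lsmul ℂ ℂ] 𝓕 u)) := by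
      rw [fourierInv_convolution hg hu]
      exact hg.integrable_smul hu
    simpa only [Real.fourierInv_eq_fourier_neg, neg_neg] using h.comp_neg
  rw [← fourierInv_convolution hg hu, hcont.fourier_fourierInv_eq hint hint']

theorem smul (hg : IsFourierInvertible g) (hu : IsFourierInvertible u) :
    IsFourierInvertible fun v ↦ g v • u v where
  continuous := hg.continuous.smul hu.continuous
  integrable := hg.integrable_smul hu
  integrable_fourier := by
    rw [hg.fourier_smul hu]
    exact hg.integrable_fourier.integrable_convolution _ hu.integrable_fourier

end IsFourierInvertible

/-- The windowed (short-time) Fourier transform of `u`, with window `g` centred at position `q` and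
at frequency `ξ`. The window is not conjugated. -/
def windowedFourier (g : V → ℂ) (u : V → E) (q ξ : V) : E :=
  𝓕 (fun y ↦ g (y - q) • u y) ξ

theorem stronglyMeasurable_windowedFourier {g : V → ℂ} {u : V → E} (hg : Continuous g)
    (hu : Continuous u) : StronglyMeasurable fun z : V × V ↦ windowedFourier g u z.1 z.2 := by
  have hcont : Continuous fun w : (V × V) × V ↦
      𝐞 (-⟪w.2, w.1.2⟫) • g (w.2 - w.1.1) • u w.2 :=
    (Real.continuous_fourierChar.comp (by fun_prop)).smul (by fun_prop)
  exact hcont.stronglyMeasurable.integral_prod_right'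

variable [CompleteSpace E] {g γ : V → ℂ} {u : V → E}

theorem norm_windowedFourier_le (hg : IsFourierInvertible g) (hu : IsFourierInvertible u)
    (q ξ : V) :
    ‖windowedFourier g u q ξ‖ ≤ ((‖𝓕 g ·‖) ⋆[.mul ℝ ℝ] (‖𝓕 u ·‖)) ξ := by
  rw [windowedFourier, (hg.comp_sub_right q).fourier_smul hu]
  refine (norm_integral_le_integral_norm _).trans_eq (integral_congr_ae (.of_forall fun η ↦ ?_))
  change ‖𝓕 (fun v ↦ g (v - q)) η • 𝓕 u (ξ - η)‖ = ‖𝓕 g η‖ * ‖𝓕 u (ξ - η)‖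
  rw [norm_smul, fourier_comp_sub_right, Circle.norm_smul]

theorem integrable_windowedFourier_synthesis (hγ : Integrable γ) (hg : IsFourierInvertible g)
    (hu : IsFourierInvertible u) (x : V) :
    Integrable fun z : V × V ↦ γ (x - z.1) • 𝐞 ⟪z.2, x⟫ • windowedFourier g u z.1 z.2 := by
  have hbound : Integrable ((‖𝓕 g ·‖) ⋆[.mul ℝ ℝ] (‖𝓕 u ·‖)) :=
    hg.integrable_fourier.norm.integrable_convolution _ hu.integrable_fourier.norm
  refine ((hγ.comp_sub_left x).norm.mul_prod hbound).mono' ?_ (.of_forall fun z ↦ ?_)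
  · have hchar : Continuous fun z : V × V ↦ 𝐞 ⟪z.2, x⟫ :=
      Real.continuous_fourierChar.comp (by fun_prop)
    refine (hγ.comp_sub_left x).aestronglyMeasurable.comp_fst.smul
      (hchar.aestronglyMeasurable.smul ?_)
    exact (stronglyMeasurable_windowedFourier hg.continuous hu.continuous).aestronglyMeasurable
  · rw [norm_smul, Circle.norm_smul]
    gcongr
    exact norm_windowedFourier_le hg hu z.1 z.2

theorem integral_fourierChar_smul_windowedFourier (hg : IsFourierInvertible g)
    (hu : IsFourierInvertible u) (q x : V) :
    ∫ ξ, 𝐞 ⟪ξ, x⟫ • windowedFourier g u q ξ = g (x - q) • u x := by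
  have h := (hg.comp_sub_right q).smul hu
  exact (Real.fourierInv_eq _ x).symm.trans
    (congrFun (h.continuous.fourierInv_fourier_eq h.integrable h.integrable_fourier) x)

theorem integral_windowedFourier_synthesis (hg : IsFourierInvertible g)
    (hu : IsFourierInvertible u) (x : V) :
    ∫ q, ∫ ξ, γ (x - q) • 𝐞 ⟪ξ, x⟫ • windowedFourier g u q ξ = (∫ v, γ v * g v) • u x := by
  simp_rw [integral_smul, integral_fourierChar_smul_windowedFourier hg hu, smul_smul]
  rw [integral_smul_const, integral_sub_left_eq_self (fun v ↦ γ v * g v)]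

end FourierInvertible

section FrozenGaussian

open scoped FourierTransform RealInnerProductSpace

theorem integrable_comp_prodMk_smul {V W E : Type*} [NormedAddCommGroup V] [NormedSpace ℝ V]
    [FiniteDimensional ℝ V] [MeasurableSpace V] [BorelSpace V] [MeasurableSpace W]
    [NormedAddCommGroup E] {μ : Measure W} [SFinite μ] {ν : Measure V} [ν.IsAddHaarMeasure]
    {f : W × V → E} (hf : Integrable f (μ.prod ν)) {r : ℝ} (hr : r ≠ 0) :
    Integrable (fun z : W × V ↦ f (z.1, r • z.2)) (μ.prod ν) := by
  have hmap : (μ.prod ν).map (Prod.map id (r • ·)) =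
      ENNReal.ofReal |(r ^ Module.finrank ℝ V)⁻¹| • μ.prod ν := by
    rw [← Measure.map_prod_map _ _ measurable_id (measurable_const_smul r), Measure.map_id,
      Measure.map_addHaar_smul ν hr, Measure.prod_smul_right]
  refine Integrable.comp_measurable (f := Prod.map id (r • ·)) (g := f) ?_ (by fun_prop)
  rw [hmap]
  exact hf.smul_measure ENNReal.ofReal_ne_top

variable {V E : Type*} [NormedAddCommGroup V] [InnerProductSpace ℝ V]

/-- The Gaussian `v ↦ e^{-|v|²/(2ε)}`, the profile of the wave packets of width `√ε`. -/
def gaussianWindow (ε : ℝ) (v : V) : ℂ :=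
  Complex.exp (-((2 * ε)⁻¹ : ℝ) * ‖v‖ ^ 2)

/-- The frozen Gaussian phase `Φ₀(x, y, q, p)` at time `t = 0`. -/
def frozenPhase (x y q p : V) : ℂ :=
  Complex.I / 2 * (‖x - q‖ ^ 2 : ℝ) + (⟪p, x - q⟫ : ℝ)
    + Complex.I / 2 * (‖y - q‖ ^ 2 : ℝ) - (⟪p, y - q⟫ : ℝ)

theorem exp_frozenPhase {ε : ℝ} (hε : ε ≠ 0) (x y q p : V) :
    Complex.exp (Complex.I / ε * frozenPhase x y q p) =
      gaussianWindow ε (x - q) * (𝐞 ⟪(2 * Real.pi * ε)⁻¹ • p, x⟫ *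
        (𝐞 (-⟪y, (2 * Real.pi * ε)⁻¹ • p⟫) * gaussianWindow ε (y - q))) := by
  have hε' : (ε : ℂ) ≠ 0 := mod_cast hε
  have hπ : (Real.pi : ℂ) ≠ 0 := mod_cast Real.pi_ne_zero
  simp only [gaussianWindow, Real.fourierChar_apply, ← Complex.exp_add, frozenPhase,
    inner_smul_left, inner_smul_right, inner_sub_right, real_inner_comm y p, conj_trivial]
  congr 1
  push_cast
  field_simp
  linear_combination (‖x - q‖ ^ 2 + ‖y - q‖ ^ 2 : ℂ) * Complex.I_sq

variable [FiniteDimensional ℝ V] [MeasurableSpace V] [BorelSpace V] [NormedAddCommGroup E]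
  [NormedSpace ℂ E]

theorem isFourierInvertible_gaussianWindow {ε : ℝ} (hε : 0 < ε) :
    IsFourierInvertible (gaussianWindow ε : V → ℂ) :=
  isFourierInvertible_gaussian (by rw [Complex.ofReal_re]; positivity)

theorem integral_gaussianWindow_mul_self {ε : ℝ} (hε : 0 < ε) :
    ∫ v : V, gaussianWindow ε v * gaussianWindow ε v =
      ((Real.pi * ε) ^ ((Module.finrank ℝ V : ℝ) / 2) : ℝ) := by
  have hsq (v : V) : gaussianWindow ε v * gaussianWindow ε v =
      Complex.exp (-(ε⁻¹ : ℝ) * ‖v‖ ^ 2) := by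
    rw [gaussianWindow, ← Complex.exp_add]
    push_cast
    ring_nf
  simp_rw [hsq]
  rw [GaussianFourier.integral_cexp_neg_mul_sq_norm (by rw [Complex.ofReal_re]; positivity),
    Complex.ofReal_cpow (by positivity)]
  simp

theorem integrable_exp_frozenPhase_smul {ε : ℝ} (hε : 0 < ε) {u : V → E}
    (hu : IsFourierInvertible u) (x q p : V) :
    Integrable fun y ↦ Complex.exp (Complex.I / ε * frozenPhase x y q p) • u y := by
  have hwindow := ((isFourierInvertible_gaussianWindow hε).comp_sub_right q).integrable_smul hu
  have h := (((Real.fourierIntegral_convergent_iff ((2 * Real.pi * ε)⁻¹ • p)).2 hwindow).smul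
    (𝐞 ⟪(2 * Real.pi * ε)⁻¹ • p, x⟫ : ℂ)).smul (gaussianWindow ε (x - q))
  simp_rw [exp_frozenPhase hε.ne', mul_smul]
  exact h

/-- The inner integral `∫ e^{iΦ₀(x,y,q,p)/ε} u(y) dy` of the frozen Gaussian approximation. -/
def frozenGaussianIntegral (ε : ℝ) (u : V → E) (x q p : V) : E :=
  ∫ y, Complex.exp (Complex.I / ε * frozenPhase x y q p) • u y

theorem frozenGaussianIntegral_eq_windowedFourier {ε : ℝ} (hε : ε ≠ 0) (u : V → E) (x q p : V) :
    frozenGaussianIntegral ε u x q p =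
      gaussianWindow ε (x - q) • 𝐞 ⟪(2 * Real.pi * ε)⁻¹ • p, x⟫ •
        windowedFourier (gaussianWindow ε) u q ((2 * Real.pi * ε)⁻¹ • p) := by
  simp_rw [frozenGaussianIntegral, exp_frozenPhase hε, windowedFourier, Real.fourier_eq,
    Circle.smul_def, mul_smul, integral_smul]

variable [CompleteSpace E] {ε : ℝ} {u : V → E}

theorem integrable_frozenGaussianIntegral (hε : 0 < ε) (hu : IsFourierInvertible u) (x : V) :
    Integrable fun z : V × V ↦ frozenGaussianIntegral ε u x z.1 z.2 := by
  have hg : IsFourierInvertible (gaussianWindow ε : V → ℂ) := isFourierInvertible_gaussianWindow hε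
  simp_rw [frozenGaussianIntegral_eq_windowedFourier hε.ne']
  exact integrable_comp_prodMk_smul
    (integrable_windowedFourier_synthesis hg.integrable hg hu x) (by positivity)

theorem integral_frozenGaussianIntegral (hε : 0 < ε) (hu : IsFourierInvertible u) (x : V) :
    ∫ q, ∫ p, frozenGaussianIntegral ε u x q p =
      (((2 * Real.pi * ε) ^ Module.finrank ℝ V *
        (Real.pi * ε) ^ ((Module.finrank ℝ V : ℝ) / 2) : ℝ) : ℂ) • u x := by
  have hg : IsFourierInvertible (gaussianWindow ε : V → ℂ) := isFourierInvertible_gaussianWindow hε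
  have hscale (q : V) : ∫ p, frozenGaussianIntegral ε u x q p =
      (2 * Real.pi * ε) ^ Module.finrank ℝ V • ∫ ξ, gaussianWindow ε (x - q) • 𝐞 ⟪ξ, x⟫ •
        windowedFourier (gaussianWindow ε) u q ξ := by
    simp_rw [frozenGaussianIntegral_eq_windowedFourier hε.ne']
    exact Measure.integral_comp_inv_smul_of_nonneg volume (fun ξ ↦ gaussianWindow ε (x - q) •
      𝐞 ⟪ξ, x⟫ • windowedFourier (gaussianWindow ε) u q ξ) (by positivity)
  simp_rw [hscale]
  rw [integral_smul, integral_windowedFourier_synthesis hg hu, integral_gaussianWindow_mul_self hε,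
    Complex.ofReal_mul, mul_smul, Complex.coe_smul, Complex.coe_smul]

theorem frozenGaussian_normalization (d : ℕ) (hε : 0 < ε) :
    (2 * Real.pi * ε) ^ (-(3 * (d : ℝ)) / 2) * ((2 : ℝ) ^ ((d : ℝ) / 2) *
      ((2 * Real.pi * ε) ^ d * (Real.pi * ε) ^ ((d : ℝ) / 2))) = 1 := by
  have hpos : 0 < 2 * Real.pi * ε := by positivity
  calc
    _ = (2 * Real.pi * ε) ^ (-(3 * (d : ℝ)) / 2) * (2 * Real.pi * ε) ^ (d : ℝ) *
        ((2 : ℝ) ^ ((d : ℝ) / 2) * (Real.pi * ε) ^ ((d : ℝ) / 2)) := by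
      rw [Real.rpow_natCast]; ring
    _ = (2 * Real.pi * ε) ^ (-(3 * (d : ℝ)) / 2 + d + d / 2) := by
      rw [← Real.mul_rpow (by positivity) (by positivity), ← mul_assoc, Real.rpow_add hpos,
        Real.rpow_add hpos]
    _ = 1 := by
      rw [show -(3 * (d : ℝ)) / 2 + d + d / 2 = 0 by ring, Real.rpow_zero]

end FrozenGaussian

theorem sum_integral_integral_apply_eq {α β ι E F : Type*} [MeasurableSpace α] [MeasurableSpace β]
    {μ : Measure α} {ν : Measure β} [SFinite μ] [SFinite ν] [Fintype ι]
    [NormedAddCommGroup E] [NormedSpace ℂ E] [CompleteSpace E]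
    [NormedAddCommGroup F] [NormedSpace ℂ F] [CompleteSpace F]
    {A : ι → α × β → E →L[ℂ] F} {T : E →L[ℂ] F} {f : α × β → E}
    (hA : ∀ m, MemLp (A m) ⊤ (μ.prod ν)) (hsum : ∀ᵐ z ∂μ.prod ν, ∑ m, A m z = T)
    (hf : Integrable f (μ.prod ν)) :
    ∑ m, ∫ a, ∫ b, A m (a, b) (f (a, b)) ∂ν ∂μ = T (∫ a, ∫ b, f (a, b) ∂ν ∂μ) := by
  have hAf (m : ι) : Integrable (fun z ↦ A m z (f z)) (μ.prod ν) :=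
    memLp_one_iff_integrable.1 <|
      (ContinuousLinearMap.id ℂ (E →L[ℂ] F)).memLp_of_bilin 1 (hA m) (memLp_one_iff_integrable.2 hf)
  calc
    _ = ∑ m, ∫ z, A m z (f z) ∂μ.prod ν :=
      Finset.sum_congr rfl fun m _ ↦ (integral_prod _ (hAf m)).symm
    _ = ∫ z, ∑ m, A m z (f z) ∂μ.prod ν := (integral_finsetSum _ fun m _ ↦ hAf m).symm
    _ = ∫ z, T (f z) ∂μ.prod ν := by
      refine integral_congr_ae (hsum.mono fun z hz ↦ ?_)
      simp only [← hz, sum_apply]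
    _ = T (∫ a, ∫ b, f (a, b) ∂ν ∂μ) := by
      rw [T.integral_comp_comm hf, integral_prod _ hf]

open Module in
theorem stmt_19_general {V E F ι : Type*}
    [NormedAddCommGroup V] [InnerProductSpace ℝ V] [FiniteDimensional ℝ V]
    [MeasurableSpace V] [BorelSpace V] [NormedAddCommGroup E] [NormedSpace ℂ E] [CompleteSpace E]
    [NormedAddCommGroup F] [NormedSpace ℂ F] [CompleteSpace F] [Fintype ι] {ε : ℝ} (hε : 0 < ε)
    {A : ι → V × V → E →L[ℂ] F} {T : E →L[ℂ] F} (hA : ∀ m, MemLp (A m) ⊤)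
    (hsum : ∀ᵐ w, ∑ m, A m w = T) {u : V → E} (hu : IsFourierInvertible u) (x : V) :
    (((2 * Real.pi * ε) ^ (-(3 * (finrank ℝ V : ℝ)) / 2) : ℝ) : ℂ) •
      ∑ m, ∫ q, ∫ p, ∫ y, (((2 : ℝ) ^ ((finrank ℝ V : ℝ) / 2) : ℝ) : ℂ) •
        Complex.exp (Complex.I / ε * frozenPhase x y q p) • A m (q, p) (u y) = T (u x) := by
  have hinner (m : ι) (q p : V) :
      ∫ y, Complex.exp (Complex.I / ε * frozenPhase x y q p) • A m (q, p) (u y) =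
        A m (q, p) (frozenGaussianIntegral ε u x q p) := by
    simp_rw [← map_smul]
    exact (A m (q, p)).integral_comp_comm (integrable_exp_frozenPhase_smul hε hu x q p)
  simp_rw [integral_smul, hinner]
  rw [← Finset.smul_sum, sum_integral_integral_apply_eq hA hsum
    (integrable_frozenGaussianIntegral hε hu x), integral_frozenGaussianIntegral hε hu, map_smul,
    smul_smul, smul_smul, ← Complex.ofReal_mul, ← Complex.ofReal_mul, mul_assoc,
    frozenGaussian_normalization _ hε, Complex.ofReal_one, one_smul]

section Coordinates

variable {ι κ : Type*} [Fintype κ]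

theorem integral_pi_eq_integral_euclideanSpace [Fintype ι] {F : Type*} [NormedAddCommGroup F]
    [NormedSpace ℝ F] (f : (ι → ℝ) → F) : ∫ v, f v = ∫ v : EuclideanSpace ℝ ι, f v.ofLp :=
  ((PiLp.volume_preserving_ofLp ι).integral_comp
    (MeasurableEquiv.toLp 2 (ι → ℝ)).symm.measurableEmbedding f).symm

theorem isFourierInvertible_schwartzMap_ofLp [Fintype ι] {E : Type*} [NormedAddCommGroup E]
    [NormedSpace ℂ E] (f : SchwartzMap (ι → ℝ) E) :
    IsFourierInvertible fun v : EuclideanSpace ℝ ι ↦ f v.ofLp :=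
  isFourierInvertible_schwartzMap <| SchwartzMap.compCLMOfContinuousLinearEquiv ℂ
    (PiLp.continuousLinearEquiv 2 ℝ fun _ : ι ↦ ℝ) f

theorem frozenPhase_euclideanSpace [Fintype ι] (x y q p : EuclideanSpace ℝ ι) :
    frozenPhase x y q p =
      Complex.I / 2 * (∑ j, (x j - q j) ^ 2 : ℝ) + (∑ j, p j * (x j - q j) : ℝ)
        + Complex.I / 2 * (∑ j, (y j - q j) ^ 2 : ℝ) - (∑ j, p j * (y j - q j) : ℝ) := by
  simp only [frozenPhase, EuclideanSpace.real_norm_sq_eq, PiLp.inner_apply, PiLp.sub_apply,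
    RCLike.inner_apply, conj_trivial, mul_comm]

/-- The functional `v ↦ ∑ k, c k * v k` on `κ → ℂ` with real coefficients `c`. -/
def rowFunctional : (κ → ℝ) →L[ℝ] (κ → ℂ) →L[ℂ] ℂ :=
  ∑ k, (ContinuousLinearMap.proj k : (κ → ℝ) →L[ℝ] ℝ).smulRight (ContinuousLinearMap.proj k)

theorem rowFunctional_apply (c : κ → ℝ) (v : κ → ℂ) :
    rowFunctional c v = ∑ k, (c k : ℂ) * v k := by
  simp [rowFunctional]

theorem rowFunctional_single_one [DecidableEq κ] (i : κ) :
    rowFunctional (Pi.single i 1 : κ → ℝ) = ContinuousLinearMap.proj i := by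
  ext v
  simp [rowFunctional_apply, Pi.single_apply, apply_ite Complex.ofReal]

/-- The `i`-th component `v ↦ Rᵢ (Lᵀ v)` of the rank-one symbol `R Lᵀ`, transported to Euclidean
phase space. -/
def rankOneSymbol (L R : (ι → ℝ) × (ι → ℝ) → κ → ℝ) (i : κ)
    (w : EuclideanSpace ℝ ι × EuclideanSpace ℝ ι) : (κ → ℂ) →L[ℂ] ℂ :=
  rowFunctional (R (w.1.ofLp, w.2.ofLp) i • L (w.1.ofLp, w.2.ofLp))

theorem sum_rankOneSymbol {μ : Type*} [Fintype μ] [DecidableEq κ]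
    {L R : μ → (ι → ℝ) × (ι → ℝ) → κ → ℝ}
    (hcomplete : ∀ w i k, ∑ m, R m w i * L m w k = if i = k then 1 else 0) (i : κ)
    (w : EuclideanSpace ℝ ι × EuclideanSpace ℝ ι) :
    ∑ m, rankOneSymbol (L m) (R m) i w = ContinuousLinearMap.proj i := by
  have hrow : ∑ m, R m (w.1.ofLp, w.2.ofLp) i • L m (w.1.ofLp, w.2.ofLp) = Pi.single i 1 := by
    ext k
    simpa [Pi.single_apply, eq_comm] using hcomplete (w.1.ofLp, w.2.ofLp) i k
  simp only [rankOneSymbol, ← map_sum, hrow, rowFunctional_single_one]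

theorem memLp_top_rankOneSymbol [Fintype ι] {L R : (ι → ℝ) × (ι → ℝ) → κ → ℝ} {CL CR : ℝ}
    (hL : Continuous L) (hR : Continuous R) (hCL : ∀ w, ‖L w‖ ≤ CL) (hCR : ∀ w, ‖R w‖ ≤ CR)
    (i : κ) : MemLp (rankOneSymbol L R i) ⊤ := by
  have hcont : Continuous (rankOneSymbol L R i) :=
    rowFunctional.continuous.comp (by fun_prop)
  refine memLp_top_of_bound hcont.aestronglyMeasurable (‖rowFunctional (κ := κ)‖ * (CR * CL))
    (.of_forall fun w ↦ ?_)
  have hRi := (norm_le_pi_norm (R (w.1.ofLp, w.2.ofLp)) i).trans (hCR _)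
  refine (rowFunctional (κ := κ)).le_of_opNorm_le_of_le le_rfl ?_
  rw [norm_smul]
  exact mul_le_mul hRi (hCL _) (norm_nonneg _) ((norm_nonneg _).trans hRi)

end Coordinates

/-- the frozen Gaussian approximation reproduces the initial datum at `t = 0`:
if the bounded continuous families `L_m, R_m` satisfy the completeness relation
`Σ_m R_m L_mᵀ = I`, then
`(2πε)^{−3d/2} Σ_m ∫∫∫ 2^{d/2} e^{iΦ₀/ε} R_m (L_mᵀ u₀)(y) dy dp dq = u₀(x)`. -/
theorem stmt_19 (d M : ℕ) (hd : 1 ≤ d) (hM : 1 ≤ M) (ε : ℝ) (hε : 0 < ε)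
    (L R : Fin M → (Fin d → ℝ) × (Fin d → ℝ) → Fin M → ℝ)
    (hLcont : ∀ m, Continuous (L m)) (hRcont : ∀ m, Continuous (R m))
    (hLbdd : ∃ C : ℝ, ∀ m w, ‖L m w‖ ≤ C) (hRbdd : ∃ C : ℝ, ∀ m w, ‖R m w‖ ≤ C)
    (hComplete : ∀ w : (Fin d → ℝ) × (Fin d → ℝ), ∀ i k : Fin M,
      ∑ m, R m w i * L m w k = if i = k then 1 else 0)
    (u0 : Fin M → SchwartzMap (Fin d → ℝ) ℂ) (x : Fin d → ℝ) (i : Fin M) :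
    (((2 * Real.pi * ε) ^ (-(3 * (d : ℝ)) / 2) : ℝ) : ℂ) *
      ∑ m, ∫ q : Fin d → ℝ, ∫ p : Fin d → ℝ, ∫ y : Fin d → ℝ,
        (((2 : ℝ) ^ ((d : ℝ) / 2) : ℝ) : ℂ) *
          Complex.exp ((Complex.I / (ε : ℂ)) *
            ((Complex.I / 2) * ((∑ j, (x j - q j) ^ 2 : ℝ) : ℂ)
              + ((∑ j, p j * (x j - q j) : ℝ) : ℂ)
              + (Complex.I / 2) * ((∑ j, (y j - q j) ^ 2 : ℝ) : ℂ)
              - ((∑ j, p j * (y j - q j) : ℝ) : ℂ)))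
          * ((R m (q, p) i : ℝ) : ℂ)
          * (∑ k, ((L m (q, p) k : ℝ) : ℂ) * u0 k y)
      = u0 i x := by
  obtain ⟨CL, hCL⟩ := hLbdd
  obtain ⟨CR, hCR⟩ := hRbdd
  have hA (m : Fin M) : MemLp (rankOneSymbol (L m) (R m) i) ⊤ :=
    memLp_top_rankOneSymbol (hLcont m) (hRcont m) (hCL m) (hCR m) i
  have hu : IsFourierInvertible fun v : EuclideanSpace ℝ (Fin d) ↦ fun k ↦ u0 k v.ofLp :=
    isFourierInvertible_pi fun k ↦ isFourierInvertible_schwartzMap_ofLp (u0 k)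
  simpa [integral_pi_eq_integral_euclideanSpace, frozenPhase_euclideanSpace, rankOneSymbol,
    rowFunctional_apply, Finset.mul_sum, mul_assoc] using
    stmt_19_general hε hA (.of_forall (sum_rankOneSymbol hComplete i)) hu (.toLp 2 x)
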